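/- arXiv:2401.08065 — 2 statements merged into one kernel-verified Lean document; each statement's English description precedes it below -/
import Mathlib

section
/- Let ρ = |ψ⟩⟨ψ| be an n-qubit pure state, let S ⊆ Fin n be a nonempty subset with |S| = s, and fix any bitstring z : S → Fin 2. Let U = ⊗_{i∈S} U_i (acting as the identity on qubits outside S) where (U_i)_{i∈S} are independent Haar-random elements of U(2), and let P_U(z) = tr(U ρ U† · |z⟩⟨z|) where |z⟩⟨z| projects the qubits in S onto the computational basis state z and acts as the identity elsewhere. Then the concentratable entanglement satisfies C_ψ(S) = 1 − 3^s · E_U[P_U(z)²], where E_U denotes integration with respect to the product of Haar probability measures on (U(2))^S. -/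
open Matrix MeasureTheory
open scoped BigOperators ComplexConjugate Kronecker

/-- `n`-qubit operators: matrices indexed by functions `Fin n → Fin 2`. -/
abbrev QMat (n : ℕ) : Type := Matrix (Fin n → Fin 2) (Fin n → Fin 2) ℂ

/-- Combine an assignment on `α` and one on its complement into a full index. -/
noncomputable def embedIdx {n : ℕ} (α : Finset (Fin n)) (i : {x : Fin n // x ∈ α} → Fin 2)
    (k : {x : Fin n // x ∉ α} → Fin 2) : Fin n → Fin 2 :=
  fun x => if h : x ∈ α then i ⟨x, h⟩ else k ⟨x, h⟩

/-- The reduced density matrix on the qubits in `α` (partial trace over the rest). -/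
noncomputable def reduced {n : ℕ} (ρ : QMat n) (α : Finset (Fin n)) :
    Matrix ({x : Fin n // x ∈ α} → Fin 2) ({x : Fin n // x ∈ α} → Fin 2) ℂ :=
  fun i j => ∑ k : ({x : Fin n // x ∉ α} → Fin 2), ρ (embedIdx α i k) (embedIdx α j k)

/-- The concentratable entanglement `C_ψ(S) = 1 - 2^{-|S|} ∑_{α ⊆ S} tr(ρ_α²)`. -/
noncomputable def CE {n : ℕ} (ρ : QMat n) (S : Finset (Fin n)) : ℝ :=
  1 - (1 / 2 : ℝ) ^ S.card *
    ∑ α ∈ S.powerset, (Matrix.trace (reduced ρ α * reduced ρ α)).re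

/-- Tensor product of single-qubit operators on the qubits in `S`, identity elsewhere. -/
noncomputable def localOp {n : ℕ} (S : Finset (Fin n))
    (V : {i : Fin n // i ∈ S} → Matrix (Fin 2) (Fin 2) ℂ) : QMat n :=
  fun x y => ∏ i : Fin n,
    if h : i ∈ S then V ⟨i, h⟩ (x i) (y i)
    else (if x i = y i then 1 else 0)

/-- Projector onto computational basis state `z` on the qubits in `S`, identity elsewhere. -/
noncomputable def projZ {n : ℕ} (S : Finset (Fin n)) (z : {i : Fin n // i ∈ S} → Fin 2) : QMat n :=
  fun x y => ∏ i : Fin n,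
    if h : i ∈ S then (if x i = z ⟨i, h⟩ ∧ y i = z ⟨i, h⟩ then 1 else 0)
    else (if x i = y i then 1 else 0)

noncomputable instance : MeasurableSpace (Matrix.unitaryGroup (Fin 2) ℂ) := borel _
instance : BorelSpace (Matrix.unitaryGroup (Fin 2) ℂ) := ⟨rfl⟩

/-- The Born probability `P_U(z) = tr(U ρ U† |z⟩⟨z|)` of outcome `z` after the local
randomized measurement given by the single-qubit unitaries `V i`, `i ∈ S`. -/
noncomputable def born {n : ℕ} (ρ : QMat n) (S : Finset (Fin n))
    (V : {i : Fin n // i ∈ S} → Matrix.unitaryGroup (Fin 2) ℂ)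
    (z : {i : Fin n // i ∈ S} → Fin 2) : ℝ :=
  (Matrix.trace (localOp S (fun i => (V i : Matrix (Fin 2) (Fin 2) ℂ)) * ρ *
      (localOp S (fun i => (V i : Matrix (Fin 2) (Fin 2) ℂ)))ᴴ * projZ S z)).re

/-!
The key fact is that the effect `E = U† |z⟩⟨z| U` of a Haar-random unitary `U` in dimension `d`
satisfies `𝔼[E ⊗ E] = (1 + SWAP) / (d (d + 1))`. Invariance under diagonal phases kills all moments
`𝔼[E_ab E_cd]` in which `a, c` is not a rearrangement of `b, d`, invariance under a square root of
the transposition of `a` and `b` forces `𝔼[E_aa²] = 2 𝔼[E_aa E_bb]`, and `tr E = 1` fixes the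
scale.

For qubits, tensoring over the independent unitaries in `S` and expanding `∏ i ∈ S, (1 + SWAP_i)`
gives `𝔼[E_S ⊗ E_S] = 6⁻ˢ ∑ α ⊆ S, SWAP_α`. Pairing this with `ρ ⊗ ρ` turns the left side into
`𝔼[P_U(z)²]` and, by the swap trick `tr ((ρ ⊗ ρ) SWAP_α) = tr ρ_α²`, the right side into the sum of
the purities.
-/

section CompactGroups

open Measure

theorem isMulRightInvariant_of_compactSpace {G : Type*} [Group G] [TopologicalSpace G]
    [IsTopologicalGroup G] [CompactSpace G] [MeasurableSpace G] [BorelSpace G]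
    (μ : Measure G) [μ.IsHaarMeasure] : μ.IsMulRightInvariant where
  map_mul_right_eq_self g := by
    have hsmul := isMulInvariant_eq_smul_of_compactSpace (μ.map (· * g)) μ
    have hmass : μ.map (· * g) Set.univ = μ Set.univ := by
      rw [map_apply (measurable_mul_const g) MeasurableSet.univ, Set.preimage_univ]
    have hfactor : haarScalarFactor (μ.map (· * g)) μ = 1 := by
      rw [hsmul, Measure.smul_apply, ENNReal.smul_def, smul_eq_mul] at hmass
      exact_mod_cast (ENNReal.mul_eq_right (NeZero.ne _) (measure_ne_top μ _)).mp hmass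
    rw [hsmul, hfactor, one_smul]

instance {𝕜 ι : Type*} [RCLike 𝕜] [Fintype ι] [DecidableEq ι] :
    CompactSpace (Matrix.unitaryGroup ι 𝕜) := by
  have hclosed : IsClosed (Matrix.unitaryGroup ι 𝕜 : Set (Matrix ι ι 𝕜)) := isClosed_unitary
  have hbox : IsCompact (Set.univ.pi fun _ => Set.univ.pi fun _ => Metric.closedBall 0 1 :
      Set (Matrix ι ι 𝕜)) :=
    isCompact_univ_pi fun _ => isCompact_univ_pi fun _ => isCompact_closedBall _ _
  refine isCompact_iff_compactSpace.mp (hbox.of_isClosed_subset hclosed fun U hU => ?_)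
  simpa using entry_norm_bound_of_unitary hU

end CompactGroups

section OutcomeEffect

variable {ι : Type*}

/-- The effect `U† |z⟩⟨z| U` of obtaining outcome `z` when a qudit is measured in the computational
basis after applying `U`. It is written as an outer product, since it only depends on the row `U z`;
see `conjTranspose_mul_single_mul`. -/
def outcomeEffect (U : Matrix ι ι ℂ) (z : ι) : Matrix ι ι ℂ :=
  vecMulVec (star (U z)) (U z)

theorem outcomeEffect_apply (U : Matrix ι ι ℂ) (z a b : ι) :
    outcomeEffect U z a b = star (U z a) * U z b :=
  rfl

theorem outcomeEffect_isHermitian (U : Matrix ι ι ℂ) (z : ι) : (outcomeEffect U z).IsHermitian := by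
  rw [Matrix.IsHermitian, outcomeEffect, conjTranspose_vecMulVec, star_star]

theorem outcomeEffect_mul_swap (U : Matrix ι ι ℂ) (z a b c d : ι) :
    outcomeEffect U z a b * outcomeEffect U z c d =
      outcomeEffect U z a d * outcomeEffect U z c b := by
  simp only [outcomeEffect_apply]
  ring

variable [Fintype ι]

theorem outcomeEffect_mul (U g : Matrix ι ι ℂ) (z : ι) :
    outcomeEffect (U * g) z = gᴴ * outcomeEffect U z * g := by
  have hrow : (U * g) z = U z ᵥ* g := rfl
  rw [outcomeEffect, outcomeEffect, hrow, star_vecMul, mul_vecMulVec, vecMulVec_mul]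

variable [DecidableEq ι]

theorem conjTranspose_mul_single_mul (U : Matrix ι ι ℂ) (z : ι) :
    Uᴴ * Matrix.single z z 1 * U = outcomeEffect U z := by
  ext a b
  simp [outcomeEffect_apply, Matrix.mul_apply, Matrix.single_apply, ite_and]

theorem trace_outcomeEffect (U : Matrix.unitaryGroup ι ℂ) (z : ι) :
    (outcomeEffect (U : Matrix ι ι ℂ) z).trace = 1 := by
  rw [← conjTranspose_mul_single_mul, Matrix.mul_assoc, trace_mul_comm, Matrix.mul_assoc,
    ← star_eq_conjTranspose, mem_unitaryGroup_iff.mp U.2, Matrix.mul_one, trace_single_eq_same]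

@[fun_prop]
theorem continuous_outcomeEffect_apply (z a b : ι) :
    Continuous fun U : Matrix.unitaryGroup ι ℂ => outcomeEffect (U : Matrix ι ι ℂ) z a b := by
  have hentry (c : ι) : Continuous fun U : Matrix.unitaryGroup ι ℂ => (U : Matrix ι ι ℂ) z c :=
    (continuous_apply_apply z c).comp continuous_subtype_val
  exact (hentry a).star.mul (hentry b)

end OutcomeEffect

section EffectMoments

theorem I_mem_unitary : Complex.I ∈ unitary ℂ := by
  simp [Unitary.mem_iff]

variable {ι : Type*} [DecidableEq ι]

/-- The transposition of `a` and `b` has the square root `(1 + i)/2 + (1 - i)/2 • (a b)`, a unitary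
which mixes the two basis vectors `a` and `b` evenly. -/
noncomputable def sqrtSwap (a b : ι) : Matrix ι ι ℂ :=
  ((1 + Complex.I) / 2) • (1 : Matrix ι ι ℂ) +
    ((1 - Complex.I) / 2) • (Equiv.swap a b).permMatrix ℂ

theorem conjTranspose_sqrtSwap (a b : ι) :
    (sqrtSwap a b)ᴴ = ((1 - Complex.I) / 2) • (1 : Matrix ι ι ℂ) +
      ((1 + Complex.I) / 2) • (Equiv.swap a b).permMatrix ℂ := by
  simp [sqrtSwap, conjTranspose_permMatrix, ← sub_eq_add_neg]

variable [Fintype ι]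

theorem sqrtSwap_mem_unitaryGroup (a b : ι) : sqrtSwap a b ∈ Matrix.unitaryGroup ι ℂ := by
  have hsq : (Equiv.swap a b).permMatrix ℂ * (Equiv.swap a b).permMatrix ℂ = 1 := by
    rw [← permMatrix_mul, Equiv.swap_mul_self, permMatrix_one]
  rw [mem_unitaryGroup_iff, star_eq_conjTranspose, conjTranspose_sqrtSwap, sqrtSwap]
  simp only [add_mul, mul_add, smul_mul_smul_comm, hsq, Matrix.one_mul, Matrix.mul_one]
  match_scalars
  · linear_combination (-1 / 2) * Complex.I_sq
  · linear_combination (1 / 2) * Complex.I_sq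

theorem conjTranspose_sqrtSwap_mul_mul_apply_self (a b : ι) (M : Matrix ι ι ℂ) :
    ((sqrtSwap a b)ᴴ * M * sqrtSwap a b) a a =
      (M a a + M b b) / 2 + Complex.I / 2 * (M b a - M a b) := by
  rw [conjTranspose_sqrtSwap, sqrtSwap]
  simp [add_mul, mul_add, PEquiv.toMatrix_toPEquiv_mul, PEquiv.mul_toMatrix_toPEquiv]
  linear_combination (M a b + M b a - M a a - M b b) / 4 * Complex.I_sq

variable [MeasurableSpace (Matrix.unitaryGroup ι ℂ)] (μ : Measure (Matrix.unitaryGroup ι ℂ))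

/-- The second moment `𝔼[E_ab E_cd]` of the outcome effect `E` of `z` under a random unitary. -/
noncomputable def effectMoment (z a b c d : ι) : ℂ :=
  ∫ U, outcomeEffect (U : Matrix ι ι ℂ) z a b * outcomeEffect (U : Matrix ι ι ℂ) z c d ∂μ

theorem effectMoment_comm (z a b c d : ι) :
    effectMoment μ z a b c d = effectMoment μ z c d a b := by
  simp only [effectMoment, mul_comm]

theorem effectMoment_swap (z a b c d : ι) :
    effectMoment μ z a b c d = effectMoment μ z a d c b := by
  simp only [effectMoment, outcomeEffect_mul_swap _ z a b]

variable [BorelSpace (Matrix.unitaryGroup ι ℂ)]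

theorem integrable_outcomeEffect_mul [IsFiniteMeasureOnCompacts μ] (z a b c d : ι) :
    Integrable (fun U : Matrix.unitaryGroup ι ℂ =>
      outcomeEffect (U : Matrix ι ι ℂ) z a b * outcomeEffect (U : Matrix ι ι ℂ) z c d) μ :=
  Continuous.integrable_of_hasCompactSupport (by fun_prop) (HasCompactSupport.of_compactSpace _)

theorem sum_effectMoment [IsProbabilityMeasure μ] (z : ι) :
    ∑ a, ∑ c, effectMoment μ z a a c c = 1 := by
  have hsum (U : Matrix.unitaryGroup ι ℂ) : ∑ a, ∑ c,
      outcomeEffect (U : Matrix ι ι ℂ) z a a * outcomeEffect (U : Matrix ι ι ℂ) z c c = 1 := by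
    rw [← Finset.sum_mul_sum]
    exact (congrArg₂ (· * ·) (trace_outcomeEffect U z) (trace_outcomeEffect U z)).trans (one_mul 1)
  have hint := integrable_outcomeEffect_mul μ z
  simp_rw [effectMoment, ← integral_finsetSum _ fun c _ => hint _ _ c c]
  rw [← integral_finsetSum _ fun a _ => integrable_finsetSum _ fun c _ => hint a a c c]
  simp only [hsum, integral_const, probReal_univ, one_smul]

section RightInvariant

variable [μ.IsMulRightInvariant]

theorem effectMoment_eq_integral_conj (g : Matrix.unitaryGroup ι ℂ) (z a b c d : ι) :
    effectMoment μ z a b c d = ∫ U : Matrix.unitaryGroup ι ℂ,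
      ((g : Matrix ι ι ℂ)ᴴ * outcomeEffect (U : Matrix ι ι ℂ) z * g) a b *
        ((g : Matrix ι ι ℂ)ᴴ * outcomeEffect (U : Matrix ι ι ℂ) z * g) c d ∂μ := by
  rw [effectMoment, ← integral_mul_right_eq_self _ g]
  simp only [Submonoid.coe_mul, outcomeEffect_mul]

theorem effectMoment_eq_phase_mul (w : ι → unitary ℂ) (z a b c d : ι) :
    effectMoment μ z a b c d =
      star (w a : ℂ) * w b * (star (w c : ℂ) * w d) * effectMoment μ z a b c d := by
  have hw : diagonal (fun i => (w i : ℂ)) ∈ Matrix.unitaryGroup ι ℂ := by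
    rw [mem_unitaryGroup_iff, star_eq_conjTranspose, diagonal_conjTranspose, diagonal_mul_diagonal,
      ← diagonal_one]
    exact congrArg diagonal (funext fun i => Unitary.coe_mul_star_self (w i))
  conv_lhs => rw [effectMoment_eq_integral_conj μ ⟨_, hw⟩]
  rw [effectMoment, ← integral_const_mul]
  congr 1 with U
  simp only [diagonal_conjTranspose, mul_diagonal, diagonal_mul, Pi.star_apply]
  ring

theorem effectMoment_eq_zero_of_phase_ne_one (w : ι → unitary ℂ) {z a b c d : ι}
    (hw : star (w a : ℂ) * w b * (star (w c : ℂ) * w d) ≠ 1) : effectMoment μ z a b c d = 0 := by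
  by_contra hne
  exact hw ((right_eq_mul₀ hne).mp (effectMoment_eq_phase_mul μ w z a b c d))

theorem effectMoment_self_eq_zero {z a c d : ι} (hcd : c ≠ d) : effectMoment μ z a a c d = 0 := by
  refine effectMoment_eq_zero_of_phase_ne_one μ (Pi.mulSingle c ⟨Complex.I, I_mem_unitary⟩) ?_
  by_cases hac : a = c <;> simp [hac, hcd.symm, Complex.ext_iff]

theorem effectMoment_eq_zero {z a b c d : ι} (hid : ¬(a = b ∧ c = d)) (hswap : ¬(a = d ∧ c = b)) :
    effectMoment μ z a b c d = 0 := by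
  by_cases hab : a = b
  · subst hab
    exact effectMoment_self_eq_zero μ fun hcd => hid ⟨rfl, hcd⟩
  by_cases had : a = d
  · subst had
    rw [effectMoment_swap]
    exact effectMoment_self_eq_zero μ fun hcb => hswap ⟨rfl, hcb⟩
  refine effectMoment_eq_zero_of_phase_ne_one μ (Pi.mulSingle a ⟨Complex.I, I_mem_unitary⟩) ?_
  rcases eq_or_ne c a with rfl | hca
  · simp [Ne.symm hab, Ne.symm had]
    norm_num
  · simp [hca, Ne.symm hab, Ne.symm had, Complex.ext_iff]

variable [IsFiniteMeasureOnCompacts μ]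

theorem effectMoment_self_eq_add {a b : ι} (hab : a ≠ b) (z : ι) :
    effectMoment μ z a a a a =
      (effectMoment μ z a a a a + effectMoment μ z b b b b) / 4 + effectMoment μ z a a b b := by
  let E (U : Matrix.unitaryGroup ι ℂ) := outcomeEffect (U : Matrix ι ι ℂ) z
  have hexpand (U : Matrix.unitaryGroup ι ℂ) :
      ((E U a a + E U b b) / 2 + Complex.I / 2 * (E U b a - E U a b)) *
        ((E U a a + E U b b) / 2 + Complex.I / 2 * (E U b a - E U a b)) =
      1 / 4 * (E U a a * E U a a) + 1 / 4 * (E U b b * E U b b) + E U a a * E U b b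
        + Complex.I / 2 * (E U a a * E U b a) - Complex.I / 2 * (E U a a * E U a b)
        + Complex.I / 2 * (E U b b * E U b a) - Complex.I / 2 * (E U b b * E U a b)
        - 1 / 4 * (E U b a * E U b a) - 1 / 4 * (E U a b * E U a b) := by
    have hswap : E U b a * E U a b = E U a a * E U b b := by
      simp only [E, outcomeEffect_apply]; ring
    linear_combination 1 / 2 * hswap + (E U b a - E U a b) ^ 2 / 4 * Complex.I_sq
  have hint (a b c d : ι) : Integrable (fun U => E U a b * E U c d) μ :=
    integrable_outcomeEffect_mul μ z a b c d
  have hintegral (a b c d : ι) : ∫ U, E U a b * E U c d ∂μ = effectMoment μ z a b c d := rfl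
  conv_lhs => rw [effectMoment_eq_integral_conj μ ⟨_, sqrtSwap_mem_unitaryGroup a b⟩]
  simp only [conjTranspose_sqrtSwap_mul_mul_apply_self]
  rw [integral_congr_ae (.of_forall hexpand), integral_sub, integral_sub, integral_sub,
    integral_add, integral_sub, integral_add, integral_add, integral_add]
  · have hbaba : effectMoment μ z b a b a = 0 :=
      effectMoment_eq_zero μ (fun h => hab h.1.symm) fun h => hab h.1.symm
    have habab : effectMoment μ z a b a b = 0 :=
      effectMoment_eq_zero μ (fun h => hab h.1) fun h => hab h.1
    simp only [integral_const_mul, hintegral, hbaba, habab, effectMoment_self_eq_zero μ hab,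
      effectMoment_self_eq_zero μ hab.symm]
    ring
  all_goals fun_prop

theorem effectMoment_self_eq_two_mul {a b : ι} (hab : a ≠ b) (z : ι) :
    effectMoment μ z a a a a = 2 * effectMoment μ z a a b b := by
  have ha := effectMoment_self_eq_add μ hab z
  have hb := effectMoment_self_eq_add μ hab.symm z
  rw [effectMoment_comm μ z b b a a] at hb
  linear_combination (3 * ha + hb) / 2

theorem effectMoment_self_eq_self (z a b : ι) :
    effectMoment μ z a a a a = effectMoment μ z b b b b := by
  rcases eq_or_ne a b with rfl | hab
  · rfl
  · rw [effectMoment_self_eq_two_mul μ hab, effectMoment_self_eq_two_mul μ hab.symm,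
      effectMoment_comm]

theorem effectMoment_self_self (z a c : ι) :
    effectMoment μ z a a c c = (1 + if a = c then 1 else 0) * (effectMoment μ z z z z z / 2) := by
  rw [effectMoment_self_eq_self μ z z a]
  rcases eq_or_ne a c with rfl | hac
  · rw [if_pos rfl]
    ring
  · rw [if_neg hac, effectMoment_self_eq_two_mul μ hac]
    ring

end RightInvariant

theorem effectMoment_self_div_two [IsProbabilityMeasure μ] [μ.IsMulRightInvariant] (z : ι) :
    effectMoment μ z z z z z / 2 = (Fintype.card ι * (Fintype.card ι + 1) : ℂ)⁻¹ := by
  refine eq_inv_of_mul_eq_one_right ?_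
  calc (Fintype.card ι * (Fintype.card ι + 1) : ℂ) * (effectMoment μ z z z z z / 2)
    _ = ∑ a : ι, ∑ c : ι, (1 + if a = c then 1 else 0) * (effectMoment μ z z z z z / 2) := by
      simp only [← Finset.sum_mul, Finset.sum_add_distrib, Finset.sum_ite_eq, Finset.mem_univ,
        if_true, Finset.sum_const, Finset.card_univ, nsmul_eq_mul, mul_one]
      ring
    _ = ∑ a, ∑ c, effectMoment μ z a a c c :=
      Finset.sum_congr rfl fun a _ => Finset.sum_congr rfl fun c _ =>
        (effectMoment_self_self μ z a c).symm
    _ = 1 := sum_effectMoment μ z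

theorem effectMoment_eq [IsProbabilityMeasure μ] [μ.IsMulRightInvariant] (z a b c d : ι) :
    effectMoment μ z a b c d =
      (Fintype.card ι * (Fintype.card ι + 1) : ℂ)⁻¹ *
        ((1 : Matrix (ι × ι) (ι × ι) ℂ) + Equiv.Perm.permMatrix ℂ (Equiv.prodComm ι ι))
          (a, c) (b, d) := by
  have hentry : ((1 : Matrix (ι × ι) (ι × ι) ℂ) + Equiv.Perm.permMatrix ℂ (Equiv.prodComm ι ι))
      (a, c) (b, d) =
      (if a = b ∧ c = d then 1 else 0) + if a = d ∧ c = b then 1 else 0 := by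
    simp [Matrix.one_apply, PEquiv.toMatrix_apply, and_comm, eq_comm]
  rw [← effectMoment_self_div_two μ z, hentry]
  by_cases hid : a = b ∧ c = d
  · obtain ⟨rfl, rfl⟩ := hid
    rw [effectMoment_self_self, mul_comm]
    simp only [eq_comm, and_self, if_true]
  by_cases hswap : a = d ∧ c = b
  · obtain ⟨rfl, rfl⟩ := hswap
    have hac : a ≠ c := fun hac => hid ⟨hac, hac.symm⟩
    rw [effectMoment_swap, effectMoment_self_self, if_neg hac, if_neg hid, mul_comm]
    simp only [and_self, if_true, add_comm]
  · rw [effectMoment_eq_zero μ hid hswap, if_neg hid, if_neg hswap, add_zero, mul_zero]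

end EffectMoments

section LocalOperators

variable {n : ℕ} {S : Finset (Fin n)}

theorem localOp_apply (V : {i : Fin n // i ∈ S} → Matrix (Fin 2) (Fin 2) ℂ) (x y : Fin n → Fin 2) :
    localOp S V x y = ∏ i, (if h : i ∈ S then V ⟨i, h⟩ else 1) (x i) (y i) := by
  refine Finset.prod_congr rfl fun i _ => ?_
  by_cases hi : i ∈ S <;> simp [hi, Matrix.one_apply]

theorem localOp_mul (V W : {i : Fin n // i ∈ S} → Matrix (Fin 2) (Fin 2) ℂ) :
    localOp S V * localOp S W = localOp S fun i => V i * W i := by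
  have hsite (i : Fin n) : (if h : i ∈ S then V ⟨i, h⟩ * W ⟨i, h⟩ else 1) =
      (if h : i ∈ S then V ⟨i, h⟩ else 1) * if h : i ∈ S then W ⟨i, h⟩ else 1 := by
    split_ifs <;> simp
  ext x y
  simp only [Matrix.mul_apply, localOp_apply, hsite, ← Finset.prod_mul_distrib]
  rw [Finset.prod_univ_sum, Fintype.piFinset_univ]

theorem conjTranspose_localOp (V : {i : Fin n // i ∈ S} → Matrix (Fin 2) (Fin 2) ℂ) :
    (localOp S V)ᴴ = localOp S fun i => (V i)ᴴ := by
  ext x y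
  simp only [conjTranspose_apply, localOp_apply, star_prod]
  refine Finset.prod_congr rfl fun i _ => ?_
  rw [← conjTranspose_apply]
  split_ifs
  · rfl
  · rw [conjTranspose_one]

theorem localOp_isHermitian {V : {i : Fin n // i ∈ S} → Matrix (Fin 2) (Fin 2) ℂ}
    (hV : ∀ i, (V i).IsHermitian) : (localOp S V).IsHermitian := by
  rw [Matrix.IsHermitian, conjTranspose_localOp]
  exact congrArg (localOp S) (funext fun i => hV i)

theorem projZ_eq_localOp (z : {i : Fin n // i ∈ S} → Fin 2) :
    projZ S z = localOp S fun i => Matrix.single (z i) (z i) 1 := by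
  ext x y
  simp only [projZ, localOp, Matrix.single_apply, eq_comm]

theorem localOp_kronecker_localOp_apply (V W : {i : Fin n // i ∈ S} → Matrix (Fin 2) (Fin 2) ℂ)
    (x x' y y' : Fin n → Fin 2) :
    (localOp S V ⊗ₖ localOp S W) (x, x') (y, y') =
      (∏ i, V i (x i) (y i) * W i (x' i) (y' i)) *
        ∏ i ∈ Sᶜ, (1 : Matrix (Fin 2 × Fin 2) (Fin 2 × Fin 2) ℂ) (x i, x' i) (y i, y' i) := by
  rw [kronecker_apply, localOp_apply, localOp_apply, ← Finset.prod_mul_distrib,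
    ← Finset.prod_mul_prod_compl S, ← Finset.prod_coe_sort S]
  congr 1
  · exact Finset.prod_congr rfl fun i _ => by simp
  · refine Finset.prod_congr rfl fun i hi => ?_
    simp [Finset.mem_compl.mp hi, Matrix.one_apply, ← ite_and, and_comm]

theorem ofReal_re_trace_mul_of_isHermitian {m : Type*} [Fintype m] {A B : Matrix m m ℂ}
    (hA : A.IsHermitian) (hB : B.IsHermitian) : ((A * B).trace.re : ℂ) = (A * B).trace := by
  refine Complex.conj_eq_iff_re.mp ?_
  rw [starRingEnd_apply, ← trace_conjTranspose, conjTranspose_mul, hA.eq, hB.eq, trace_mul_comm]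

/-- The effect `U† |z⟩⟨z| U` on the whole system of the local measurement with outcome `z`, for the
product unitary `U` with tensor factors `V i` on the qubits in `S`. -/
noncomputable def localEffect (V : {i : Fin n // i ∈ S} → Matrix.unitaryGroup (Fin 2) ℂ)
    (z : {i : Fin n // i ∈ S} → Fin 2) : QMat n :=
  localOp S fun i => outcomeEffect (V i : Matrix (Fin 2) (Fin 2) ℂ) (z i)

theorem localEffect_isHermitian (V : {i : Fin n // i ∈ S} → Matrix.unitaryGroup (Fin 2) ℂ)
    (z : {i : Fin n // i ∈ S} → Fin 2) : (localEffect V z).IsHermitian :=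
  localOp_isHermitian fun i => outcomeEffect_isHermitian (V i : Matrix (Fin 2) (Fin 2) ℂ) (z i)

theorem localEffect_eq (V : {i : Fin n // i ∈ S} → Matrix.unitaryGroup (Fin 2) ℂ)
    (z : {i : Fin n // i ∈ S} → Fin 2) :
    localEffect V z = (localOp S fun i => (V i : Matrix (Fin 2) (Fin 2) ℂ))ᴴ * projZ S z *
      localOp S fun i => (V i : Matrix (Fin 2) (Fin 2) ℂ) := by
  simp only [localEffect, ← conjTranspose_mul_single_mul, ← localOp_mul, ← conjTranspose_localOp,
    ← projZ_eq_localOp]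

theorem born_eq_trace {ρ : QMat n} (hρ : ρ.IsHermitian)
    (V : {i : Fin n // i ∈ S} → Matrix.unitaryGroup (Fin 2) ℂ) (z : {i : Fin n // i ∈ S} → Fin 2) :
    (born ρ S V z : ℂ) = (ρ * localEffect V z).trace := by
  rw [← ofReal_re_trace_mul_of_isHermitian hρ (localEffect_isHermitian V z), born, localEffect_eq,
    Matrix.mul_assoc, Matrix.mul_assoc, trace_mul_comm, Matrix.mul_assoc]

end LocalOperators

section PartialSwap

variable {ι κ : Type*} [DecidableEq ι]

/-- The exchange of the `α`-parts of two configurations. Its permutation matrix is the operator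
`SWAP_α` exchanging the tensor factors in `α` between two copies of a system. -/
def partialSwap (α : Finset ι) : Equiv.Perm ((ι → κ) × (ι → κ)) :=
  Function.Involutive.toPerm (fun p => (α.piecewise p.2 p.1, α.piecewise p.1 p.2)) fun p => by
    ext i <;> by_cases hi : i ∈ α <;> simp [hi]

theorem partialSwap_apply (α : Finset ι) (x x' : ι → κ) :
    partialSwap α (x, x') = (α.piecewise x' x, α.piecewise x x') :=
  rfl

theorem permMatrix_partialSwap_apply [Fintype ι] [DecidableEq κ] (R : Type*) [CommSemiring R]
    (α : Finset ι) (x x' y y' : ι → κ) :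
    (partialSwap α).permMatrix R (x, x') (y, y') = ∏ i,
      if i ∈ α then Equiv.Perm.permMatrix R (Equiv.prodComm κ κ) (x i, x' i) (y i, y' i)
      else (1 : Matrix (κ × κ) (κ × κ) R) (x i, x' i) (y i, y' i) := by
  have hsite (i : ι) : (if i ∈ α then
        Equiv.Perm.permMatrix R (Equiv.prodComm κ κ) (x i, x' i) (y i, y' i)
      else (1 : Matrix (κ × κ) (κ × κ) R) (x i, x' i) (y i, y' i)) =
      if α.piecewise x' x i = y i ∧ α.piecewise x x' i = y' i then 1 else 0 := by
    by_cases hi : i ∈ α <;> simp [hi, PEquiv.toMatrix_apply, Matrix.one_apply]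
  simp only [hsite, Finset.prod_ite_zero, Finset.prod_const_one, Finset.mem_univ,
    forall_const, forall_and, ← funext_iff]
  simp [PEquiv.toMatrix_apply, partialSwap_apply]

end PartialSwap

section SwapTrick

variable {n : ℕ} (α : Finset (Fin n))

theorem sum_eq_sum_embedIdx {M : Type*} [AddCommMonoid M] (f : (Fin n → Fin 2) → M) :
    ∑ x, f x = ∑ i, ∑ k, f (embedIdx α i k) := by
  rw [← Fintype.sum_prod_type']
  exact Fintype.sum_equiv (Equiv.piEquivPiSubtypeProd (· ∈ α) fun _ => Fin 2) _ _
    fun x => congrArg f ((Equiv.piEquivPiSubtypeProd (· ∈ α) fun _ => Fin 2).left_inv x).symm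

theorem piecewise_embedIdx (i j : {a : Fin n // a ∈ α} → Fin 2)
    (k l : {a : Fin n // a ∉ α} → Fin 2) :
    α.piecewise (embedIdx α i k) (embedIdx α j l) = embedIdx α i l := by
  ext a
  by_cases ha : a ∈ α <;> simp [embedIdx, ha]

theorem trace_kronecker_mul_partialSwap (ρ : QMat n) :
    ((ρ ⊗ₖ ρ) * (partialSwap α).permMatrix ℂ).trace = (reduced ρ α * reduced ρ α).trace := by
  calc ((ρ ⊗ₖ ρ) * (partialSwap α).permMatrix ℂ).trace
    _ = ∑ x, ∑ x', ρ x (α.piecewise x' x) * ρ x' (α.piecewise x x') := by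
      simp only [Matrix.trace, PEquiv.mul_toMatrix_toPEquiv, Fintype.sum_prod_type]
      rfl
    _ = ∑ i, ∑ k, ∑ j, ∑ l, ρ (embedIdx α i k) (embedIdx α j k) *
          ρ (embedIdx α j l) (embedIdx α i l) := by
      simp only [sum_eq_sum_embedIdx α, piecewise_embedIdx]
    _ = (reduced ρ α * reduced ρ α).trace := by
      simp only [Matrix.trace, Matrix.diag_apply, Matrix.mul_apply, reduced, Finset.sum_mul_sum]
      exact Finset.sum_congr rfl fun i _ => Finset.sum_comm

end SwapTrick

section Averaging

theorem integral_trace_mul {𝕜 Ω m n : Type*} [RCLike 𝕜] [Fintype m] [Fintype n]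
    [MeasurableSpace Ω] {P : Measure Ω} (A : Matrix m n 𝕜) {M : Ω → Matrix n m 𝕜}
    (hM : ∀ i j, Integrable (fun ω => M ω i j) P) :
    ∫ ω, (A * M ω).trace ∂P = (A * of fun i j => ∫ ω, M ω i j ∂P).trace := by
  simp only [Matrix.trace, Matrix.diag_apply, Matrix.mul_apply, of_apply, ← integral_const_mul]
  rw [integral_finsetSum _ fun i _ =>
    integrable_finsetSum _ fun j _ => (hM j i).const_mul (A i j)]
  exact Finset.sum_congr rfl fun i _ =>
    integral_finsetSum _ fun j _ => (hM j i).const_mul (A i j)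

theorem prod_add_mul_prod_compl {ι R : Type*} [Fintype ι] [DecidableEq ι] [CommSemiring R]
    (S : Finset ι) (f g : ι → R) :
    (∏ i ∈ S, (f i + g i)) * ∏ i ∈ Sᶜ, f i =
      ∑ α ∈ S.powerset, ∏ i, if i ∈ α then g i else f i := by
  simp only [add_comm (f _), Finset.prod_add, Finset.sum_mul]
  refine Finset.sum_congr rfl fun α hα => ?_
  have hcompl : (∏ i ∈ S \ α, f i) * ∏ i ∈ Sᶜ, f i = ∏ i ∈ αᶜ, f i := by
    rw [← compl_sdiff_compl,
      Finset.prod_sdiff (Finset.compl_subset_compl.mpr (Finset.mem_powerset.mp hα))]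
  rw [mul_assoc, hcompl, ← Finset.prod_mul_prod_compl α]
  congr 1
  · exact Finset.prod_congr rfl fun i hi => (if_pos hi).symm
  · exact Finset.prod_congr rfl fun i hi => (if_neg (Finset.mem_compl.mp hi)).symm

variable {n : ℕ} {S : Finset (Fin n)}
  (μ : Measure (Matrix.unitaryGroup (Fin 2) ℂ)) [IsProbabilityMeasure μ]
  (z : {i : Fin n // i ∈ S} → Fin 2)

theorem integrable_localEffect_kronecker (p q : (Fin n → Fin 2) × (Fin n → Fin 2)) :
    Integrable (fun V => (localEffect V z ⊗ₖ localEffect V z) p q)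
      (Measure.pi fun _ : {i : Fin n // i ∈ S} => μ) := by
  obtain ⟨x, x'⟩ := p
  obtain ⟨y, y'⟩ := q
  simp only [localEffect, localOp_kronecker_localOp_apply]
  exact (Integrable.fintype_prod fun i =>
    integrable_outcomeEffect_mul μ (z i) (x i) (y i) (x' i) (y' i)).mul_const _

theorem integral_localEffect_kronecker [μ.IsMulRightInvariant]
    (p q : (Fin n → Fin 2) × (Fin n → Fin 2)) :
    ∫ V, (localEffect V z ⊗ₖ localEffect V z) p q
        ∂(Measure.pi fun _ : {i : Fin n // i ∈ S} => μ) =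
      (1 / 6 : ℂ) ^ S.card * ∑ α ∈ S.powerset, (partialSwap α).permMatrix ℂ p q := by
  obtain ⟨x, x'⟩ := p
  obtain ⟨y, y'⟩ := q
  let I (i : Fin n) := (1 : Matrix (Fin 2 × Fin 2) (Fin 2 × Fin 2) ℂ) (x i, x' i) (y i, y' i)
  let F (i : Fin n) :=
    Equiv.Perm.permMatrix ℂ (Equiv.prodComm (Fin 2) (Fin 2)) (x i, x' i) (y i, y' i)
  have hsite (i : {i : Fin n // i ∈ S}) :
      effectMoment μ (z i) (x i) (y i) (x' i) (y' i) = 1 / 6 * (I i + F i) := by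
    rw [effectMoment_eq]
    norm_num [I, F]
  calc ∫ V, (localEffect V z ⊗ₖ localEffect V z) (x, x') (y, y')
        ∂(Measure.pi fun _ : {i : Fin n // i ∈ S} => μ)
    _ = (∏ i : {i : Fin n // i ∈ S}, effectMoment μ (z i) (x i) (y i) (x' i) (y' i)) *
          ∏ i ∈ Sᶜ, I i := by
      simp only [localEffect, localOp_kronecker_localOp_apply]
      rw [integral_mul_const]
      exact congrArg (· * _) (integral_fintype_prod_eq_prod (μ := fun _ => μ)
        fun (i : {i : Fin n // i ∈ S}) (U : Matrix.unitaryGroup (Fin 2) ℂ) =>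
          outcomeEffect (U : Matrix (Fin 2) (Fin 2) ℂ) (z i) (x i) (y i) *
            outcomeEffect (U : Matrix (Fin 2) (Fin 2) ℂ) (z i) (x' i) (y' i))
    _ = (1 / 6) ^ S.card * ((∏ i ∈ S, (I i + F i)) * ∏ i ∈ Sᶜ, I i) := by
      simp only [hsite]
      rw [Finset.prod_coe_sort S fun i => 1 / 6 * (I i + F i), Finset.prod_mul_distrib,
        Finset.prod_const, mul_assoc]
    _ = (1 / 6) ^ S.card * ∑ α ∈ S.powerset, (partialSwap α).permMatrix ℂ (x, x') (y, y') := by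
      simp only [prod_add_mul_prod_compl, permMatrix_partialSwap_apply, I, F]

theorem integral_born_sq [μ.IsMulRightInvariant] {ρ : QMat n} (hρ : ρ.IsHermitian) :
    ((∫ V, born ρ S V z ^ 2 ∂(Measure.pi fun _ : {i : Fin n // i ∈ S} => μ) : ℝ) : ℂ) =
      (1 / 6) ^ S.card * ∑ α ∈ S.powerset, (reduced ρ α * reduced ρ α).trace := by
  have hborn (V : {i : Fin n // i ∈ S} → Matrix.unitaryGroup (Fin 2) ℂ) :
      ((born ρ S V z ^ 2 : ℝ) : ℂ) =
        ((ρ ⊗ₖ ρ) * (localEffect V z ⊗ₖ localEffect V z)).trace := by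
    rw [← mul_kronecker_mul, trace_kronecker, Complex.ofReal_pow, born_eq_trace hρ, sq]
  have hmean : (of fun p q => ∫ V, (localEffect V z ⊗ₖ localEffect V z) p q
        ∂(Measure.pi fun _ : {i : Fin n // i ∈ S} => μ)) =
      (1 / 6 : ℂ) ^ S.card • ∑ α ∈ S.powerset, (partialSwap α).permMatrix ℂ := by
    ext p q
    rw [of_apply, integral_localEffect_kronecker, Matrix.smul_apply, Matrix.sum_apply, smul_eq_mul]
  rw [← integral_complex_ofReal]
  simp only [hborn]
  rw [integral_trace_mul _ (integrable_localEffect_kronecker μ z), hmean, Matrix.mul_smul,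
    trace_smul, Matrix.mul_sum, trace_sum, smul_eq_mul]
  simp only [trace_kronecker_mul_partialSwap]

end Averaging

theorem CE_eq_LRM_single_string_general {n : ℕ} {ρ : QMat n} (hρ : ρ.IsHermitian)
    (S : Finset (Fin n)) (z : {i : Fin n // i ∈ S} → Fin 2)
    (μ : Measure (Matrix.unitaryGroup (Fin 2) ℂ)) [μ.IsMulRightInvariant]
    [IsProbabilityMeasure μ] :
    CE ρ S = 1 - (3 : ℝ) ^ S.card *
      ∫ V, born ρ S V z ^ 2 ∂(Measure.pi fun _ : {i : Fin n // i ∈ S} => μ) := by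
  have hmean : ∫ V, born ρ S V z ^ 2 ∂(Measure.pi fun _ : {i : Fin n // i ∈ S} => μ) =
      (1 / 6) ^ S.card * ∑ α ∈ S.powerset, (reduced ρ α * reduced ρ α).trace.re := by
    rw [← Complex.re_sum, ← Complex.re_ofReal_mul, ← Complex.ofReal_re (∫ V, _ ∂_),
      integral_born_sq μ z hρ]
    push_cast
    rfl
  rw [CE, hmean, ← mul_assoc, ← mul_pow]
  norm_num

/-- **CEs via LRMs (single bitstring)**: for any fixed bitstring `z`,
`C_ψ(S) = 1 - 3^s 𝔼_U[P_U(z)²]`, where the expectation is over independent Haar-random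
single-qubit unitaries on the qubits in `S`. -/
theorem CE_eq_LRM_single_string (n : ℕ) (ψ : (Fin n → Fin 2) → ℂ)
    (hψ : (∑ x, star (ψ x) * ψ x) = 1)
    (S : Finset (Fin n)) (hS : S.Nonempty) (z : {i : Fin n // i ∈ S} → Fin 2)
    (μ : Measure (Matrix.unitaryGroup (Fin 2) ℂ)) [μ.IsHaarMeasure] [IsProbabilityMeasure μ] :
    CE (Matrix.vecMulVec ψ (star ψ)) S
      = 1 - (3 : ℝ) ^ S.card *
        ∫ V : ({i : Fin n // i ∈ S} → Matrix.unitaryGroup (Fin 2) ℂ),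
          (born (Matrix.vecMulVec ψ (star ψ)) S V z) ^ 2
          ∂(Measure.pi fun _ : {i : Fin n // i ∈ S} => μ) := by
  have : μ.IsMulRightInvariant := isMulRightInvariant_of_compactSpace μ
  exact CE_eq_LRM_single_string_general (by simp [Matrix.IsHermitian]) S z μ
end

section
/- Let ρ = |ψ⟩⟨ψ| be an n-qubit pure state and S ⊆ Fin n nonempty with |S| = s. With U = ⊗_{i∈S} U_i a product of independent Haar-random elements of U(2) and P_U(z) = tr(U ρ U† |z⟩⟨z|), the averaged sum of squared outcome probabilities satisfies P₂ := E_U[Σ_{z ∈ {0,1}^S} P_U(z)²] ≤ (2/3)^s. Consequently, the single-unitary estimator Ĉ_l^(2) = 1 − (3/2)^s · 1{Z_{l,1} = Z_{l,2}} (with Z_{l,1}, Z_{l,2} i.i.d. with law P_{U_l} conditionally on U_l) has variance Var[Ĉ_l^(2)] = (9/4)^s · P₂(1 − P₂) ≤ (3/2)^s. -/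
open Matrix MeasureTheory
open scoped BigOperators ComplexConjugate Kronecker

/-- The Born distribution on outcome strings, as a measure. -/
noncomputable def bornMeasure {n : ℕ} (ρ : QMat n) (S : Finset (Fin n))
    (V : {i : Fin n // i ∈ S} → Matrix.unitaryGroup (Fin 2) ℂ) :
    Measure ({i : Fin n // i ∈ S} → Fin 2) :=
  ∑ z : ({i : Fin n // i ∈ S} → Fin 2), ENNReal.ofReal (born ρ S V z) • Measure.dirac z

/-- Joint law of one round of the LRM experiment: a tuple of Haar-random single-qubit
unitaries together with `K` conditionally i.i.d. Born-distributed outcomes. -/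
noncomputable def jointRound {n : ℕ} (μ : Measure (Matrix.unitaryGroup (Fin 2) ℂ))
    (ρ : QMat n) (S : Finset (Fin n)) (K : ℕ) :
    Measure (({i : Fin n // i ∈ S} → Matrix.unitaryGroup (Fin 2) ℂ) ×
      (Fin K → ({i : Fin n // i ∈ S} → Fin 2))) :=
  (Measure.pi fun _ : {i : Fin n // i ∈ S} => μ).bind
    (fun V => (Measure.pi fun _ : Fin K => bornMeasure ρ S V).map (Prod.mk V))

/-!
`∑ z, P_U(z)²` is the expectation, in two copies of `ρ`, of the tensor product over `S` of the
single-site collision operators `∑ z, U_i†|z⟩⟨z|U_i ⊗ U_i†|z⟩⟨z|U_i`. The Haar average of such an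
operator commutes with all `W ⊗ W` and absorbs the swap, so it is a multiple of the projector onto
the symmetric subspace; comparing traces, the multiple is `2/3` for a qubit. By independence, `P₂`
is `(2/3)^s` times the expectation of an orthogonal projector in `ρ ⊗ ρ`, and that is at most `1`.
The estimator is an affine function of a Bernoulli variable with parameter `P₂`, which gives its
variance.
-/

section SymmetricSubspace

variable {d : Type*} [DecidableEq d]

variable (d) in
/-- The operator exchanging the two factors of `ℂ^d ⊗ ℂ^d`. -/
def swapMatrix : Matrix (d × d) (d × d) ℂ :=
  Equiv.Perm.permMatrix ℂ (Equiv.prodComm d d)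

variable (d) in
/-- The orthogonal projector onto the symmetric subspace of `ℂ^d ⊗ ℂ^d`. -/
noncomputable def symProj : Matrix (d × d) (d × d) ℂ :=
  (1 / 2 : ℂ) • (1 + swapMatrix d)

lemma swapMatrix_apply (v w : d × d) : swapMatrix d v w = if v = w.swap then 1 else 0 := by
  rw [swapMatrix, Equiv.Perm.permMatrix, PEquiv.toMatrix_toPEquiv_apply, Pi.single_apply]
  exact if_congr (eq_comm.trans Prod.swap_eq_iff_eq_swap) rfl rfl

variable [Fintype d]

lemma mul_swapMatrix_apply {m : Type*} (M : Matrix m (d × d) ℂ) (v : m) (w : d × d) :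
    (M * swapMatrix d) v w = M v w.swap := by
  simp [swapMatrix, PEquiv.mul_toMatrix_toPEquiv]

lemma isStarProjection_symProj : IsStarProjection (symProj d) where
  isIdempotentElem := by
    have hsq : swapMatrix d * swapMatrix d = 1 := by
      ext v w
      rw [mul_swapMatrix_apply, swapMatrix_apply, Prod.swap_swap, one_apply]
    simp only [IsIdempotentElem, symProj, smul_mul_smul_comm, add_mul, mul_add, hsq, mul_one,
      one_mul]
    module
  isSelfAdjoint := by
    have hswap : star (swapMatrix d) = swapMatrix d := by
      rw [swapMatrix, star_eq_conjTranspose, conjTranspose_permMatrix]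
      rfl
    rw [IsSelfAdjoint, symProj, star_smul, star_add, star_one, hswap]
    simp

lemma trace_symProj :
    (symProj d).trace = Fintype.card d * (Fintype.card d + 1) / 2 := by
  have hswap : (swapMatrix d).trace = Fintype.card d := by
    have h (a b : d) : swapMatrix d (a, b) (a, b) = if b = a then 1 else 0 := by
      rw [swapMatrix_apply]
      exact if_congr (by simp [eq_comm]) rfl rfl
    simp_rw [trace, diag_apply, Fintype.sum_prod_type, h, Finset.sum_ite_eq']
    simp
  rw [symProj, trace_smul, trace_add, trace_one, hswap, Fintype.card_prod, smul_eq_mul]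
  push_cast
  ring

variable {M : Matrix (d × d) (d × d) ℂ}

lemma apply_eq_zero_of_commute_kronecker_self
    (hM : ∀ W ∈ unitaryGroup d ℂ, Commute (W ⊗ₖ W) M) {v w : d × d} (h : v ≠ w)
    (hswap : v ≠ w.swap) : M v w = 0 := by
  -- A diagonal unitary multiplying a single basis vector by `i` separates the two index pairs.
  let θ (x : d) : d → ℂ := Function.update (fun _ => 1) x Complex.I
  have hphase (x : d) : M v w = 0 ∨ θ x v.1 * θ x v.2 = θ x w.1 * θ x w.2 := by
    have hD : diagonal (θ x) ∈ unitaryGroup d ℂ := by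
      rw [mem_unitaryGroup_iff, star_eq_conjTranspose, diagonal_conjTranspose,
        diagonal_mul_diagonal, ← diagonal_one]
      congr 1
      ext y
      by_cases hy : y = x <;> simp [θ, hy]
    have hvw := congrFun₂ (hM _ hD) v w
    rw [diagonal_kronecker_diagonal, diagonal_mul, mul_diagonal, mul_comm (M v w)] at hvw
    exact (mul_eq_mul_right_iff.mp hvw).symm
  obtain ⟨a, b⟩ := v
  obtain ⟨c, e⟩ := w
  have h1 := hphase a
  have h2 := hphase b
  by_contra h0
  simp only [h0, false_or, θ, Function.update_apply] at h1 h2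
  have hI : Complex.I ≠ 1 := by simp [Complex.ext_iff]
  have hI' : Complex.I * Complex.I = -1 := Complex.I_mul_I
  simp only [ne_eq, Prod.mk.injEq, Prod.swap_prod_mk] at h hswap
  grind

lemma permMatrix_mem_unitaryGroup (σ : Equiv.Perm d) : σ.permMatrix ℂ ∈ unitaryGroup d ℂ := by
  rw [mem_unitaryGroup_iff, star_eq_conjTranspose, conjTranspose_permMatrix, ← permMatrix_mul,
    inv_mul_cancel, permMatrix_one]

lemma apply_perm_of_commute_kronecker_self
    (hM : ∀ W ∈ unitaryGroup d ℂ, Commute (W ⊗ₖ W) M) (σ : Equiv.Perm d) (a b c e : d) :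
    M (σ a, σ b) (σ c, σ e) = M (a, b) (c, e) := by
  have h := congrFun₂ (hM _ (permMatrix_mem_unitaryGroup σ)) (a, b) (σ c, σ e)
  simpa [mul_apply, Fintype.sum_prod_type, PEquiv.toMatrix_apply, ite_and] using h

lemma commute_permMatrix_kronecker_one_add
    (hM : ∀ W ∈ unitaryGroup d ℂ, Commute (W ⊗ₖ W) M) {σ : Equiv.Perm d} (hσ : σ * σ = 1) :
    Commute (σ.permMatrix ℂ ⊗ₖ 1 + 1 ⊗ₖ σ.permMatrix ℂ) M := by
  set P := σ.permMatrix ℂ with hP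
  have hPP : P * P = 1 := by rw [hP, ← permMatrix_mul, hσ, permMatrix_one]
  have hPH : star P = P := by
    rw [star_eq_conjTranspose, hP, conjTranspose_permMatrix, inv_eq_of_mul_eq_one_right hσ]
  -- `α + β P` is a unitary square root of `P`. Removing `1` and `P ⊗ P`, both of which commute
  -- with `M`, from its tensor square leaves a multiple of `P ⊗ 1 + 1 ⊗ P`.
  set α : ℂ := (1 + Complex.I) / 2 with hα
  set β : ℂ := (1 - Complex.I) / 2 with hβ
  have hαβ : 2 * (α * β) = 1 := by
    linear_combination (-1 / 2 : ℂ) * Complex.I_sq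
  have hαH : star α = β := by
    rw [hα, hβ, star_div₀, star_add, star_one, star_ofNat, Complex.star_def, Complex.conj_I,
      ← sub_eq_add_neg]
  have hβH : star β = α := by rw [← hαH, star_star]
  have hG : α • 1 + β • P ∈ unitaryGroup d ℂ := by
    rw [mem_unitaryGroup_iff, star_add, star_smul, star_smul, star_one, hPH, hαH, hβH]
    simp only [add_mul, mul_add, smul_mul_smul_comm, one_mul, mul_one, hPP]
    have : α * α + β * β = 0 := by linear_combination (1 / 2 : ℂ) * Complex.I_sq
    linear_combination (norm := module) hαβ • (1 : Matrix d d ℂ) + this • P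
  have hexp : P ⊗ₖ 1 + 1 ⊗ₖ P = (2 : ℂ) • ((α • 1 + β • P) ⊗ₖ (α • 1 + β • P) -
      (α * α) • 1 - (β * β) • P ⊗ₖ P) := by
    simp only [add_kronecker, kronecker_add, smul_kronecker, kronecker_smul, one_kronecker_one]
    linear_combination (norm := module) -hαβ • (P ⊗ₖ 1 + 1 ⊗ₖ P : Matrix (d × d) (d × d) ℂ)
  rw [hexp]
  exact (((hM _ hG).sub_left ((Commute.one_left M).smul_left _)).sub_left
    ((hM _ (permMatrix_mem_unitaryGroup σ)).smul_left _)).smul_left _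

lemma apply_self_eq_two_mul_of_commute_kronecker_self
    (hM : ∀ W ∈ unitaryGroup d ℂ, Commute (W ⊗ₖ W) M) (hsymm : M * swapMatrix d = M)
    {a b : d} (hab : a ≠ b) : M (a, a) (a, a) = 2 * M (a, b) (a, b) := by
  have hflip : M (b, a) (a, b) = M (a, b) (a, b) := by
    have h := apply_perm_of_commute_kronecker_self hM (Equiv.swap a b) a b b a
    have h' := congrFun₂ hsymm (a, b) (a, b)
    rw [mul_swapMatrix_apply, Prod.swap_prod_mk] at h'
    simpa [h'] using h
  have hzero : M (a, a) (b, b) = 0 :=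
    apply_eq_zero_of_commute_kronecker_self hM (by simp [hab]) (by simp [hab])
  have h := congrFun₂ (commute_permMatrix_kronecker_one_add hM (Equiv.swap_mul_self a b))
    (a, a) (a, b)
  simp only [mul_apply, Matrix.add_apply, kroneckerMap_apply, PEquiv.toMatrix_apply,
    Equiv.toPEquiv_apply, Equiv.swap_apply_left, Equiv.swap_apply_right, Equiv.swap_apply_eq_iff,
    Option.mem_def, Option.some.injEq, one_apply, mul_ite, ite_mul, mul_one, one_mul, mul_zero,
    zero_mul, add_mul, mul_add, Finset.sum_add_distrib, Fintype.sum_prod_type, Finset.sum_ite_eq,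
    Finset.sum_ite_eq', Finset.mem_univ, ↓reduceIte, hflip, hzero, zero_add] at h
  linear_combination -h

/-- Schur–Weyl duality for two copies, on the symmetric subspace. -/
lemma exists_eq_smul_symProj_of_commute_kronecker_self
    (hM : ∀ W ∈ unitaryGroup d ℂ, Commute (W ⊗ₖ W) M) (hsymm : M * swapMatrix d = M) :
    ∃ c : ℂ, M = c • symProj d := by
  rcases isEmpty_or_nonempty d with hd | ⟨⟨o⟩⟩
  · exact ⟨0, Subsingleton.elim _ _⟩
  refine ⟨M (o, o) (o, o), ?_⟩
  have hself (a : d) : M (a, a) (a, a) = M (o, o) (o, o) := by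
    simpa using apply_perm_of_commute_kronecker_self hM (Equiv.swap o a) o o o o
  have hdiag {a b : d} (hab : a ≠ b) : M (a, b) (a, b) = M (o, o) (o, o) / 2 := by
    rw [← hself a, apply_self_eq_two_mul_of_commute_kronecker_self hM hsymm hab]
    ring
  have hflip (v w : d × d) : M v w.swap = M v w := by
    rw [← mul_swapMatrix_apply M, hsymm]
  ext ⟨a, b⟩ w
  rw [symProj, Matrix.smul_apply, Matrix.smul_apply, Matrix.add_apply, one_apply, swapMatrix_apply,
    smul_eq_mul, smul_eq_mul]
  by_cases h : (a, b) = w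
  · subst h
    by_cases hab : a = b
    · subst hab
      rw [hself, if_pos rfl, if_pos Prod.swap_prod_mk.symm]
      ring
    · rw [hdiag hab, if_pos rfl, if_neg (by simp [hab])]
      ring
  · by_cases hs : (a, b) = w.swap
    · have hab : a ≠ b := by
        rintro rfl
        exact h (by rw [← w.swap_swap, ← hs, Prod.swap_prod_mk])
      rw [← hflip, ← hs, hdiag hab, if_neg h, if_pos rfl]
      ring
    · rw [apply_eq_zero_of_commute_kronecker_self hM h hs, if_neg h, if_neg hs]
      ring

end SymmetricSubspace

lemma trace_submatrix_equiv {m l R : Type*} [Fintype m] [Fintype l] [AddCommMonoid R] (e : l ≃ m)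
    (A : Matrix m m R) : (A.submatrix e e).trace = A.trace :=
  e.sum_comp A.diag

section TensorProduct

variable {ι d R : Type*} [Fintype ι] [CommSemiring R]

/-- The tensor product `⨂ i, B i` of a family of operators on `R^d`, with the basis of
`⨂ i, R^d` indexed by functions `ι → d`. -/
def piKronecker (B : ι → Matrix d d R) : Matrix (ι → d) (ι → d) R :=
  of fun x y => ∏ i, B i (x i) (y i)

lemma piKronecker_mul [DecidableEq ι] [Fintype d] (B C : ι → Matrix d d R) :
    piKronecker B * piKronecker C = piKronecker fun i => B i * C i := by
  ext x y
  simp only [piKronecker, mul_apply, of_apply, ← Finset.prod_mul_distrib, Finset.prod_univ_sum,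
    Fintype.piFinset_univ]

lemma piKronecker_conjTranspose [StarRing R] (B : ι → Matrix d d R) :
    (piKronecker B)ᴴ = piKronecker fun i => (B i)ᴴ := by
  ext x y
  simp only [piKronecker, conjTranspose_apply, of_apply, star_prod]

lemma piKronecker_kronecker (B C : ι → Matrix d d R) :
    piKronecker (fun i => B i ⊗ₖ C i) =
      (piKronecker B ⊗ₖ piKronecker C).submatrix (Equiv.arrowProdEquivProdArrow ι _ _)
        (Equiv.arrowProdEquivProdArrow ι _ _) := by
  ext x y
  exact Finset.prod_mul_distrib

lemma isStarProjection_piKronecker [DecidableEq ι] [Fintype d] [StarRing R]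
    {B : ι → Matrix d d R} (hB : ∀ i, IsStarProjection (B i)) :
    IsStarProjection (piKronecker B) where
  isIdempotentElem := by
    rw [IsIdempotentElem, piKronecker_mul]
    simp only [(hB _).isIdempotentElem.eq]
  isSelfAdjoint := by
    rw [IsSelfAdjoint, star_eq_conjTranspose, piKronecker_conjTranspose]
    simp only [← star_eq_conjTranspose, (hB _).isSelfAdjoint.star_eq]

variable [DecidableEq ι] [DecidableEq d] (S : Finset ι)

/-- The operator acting as `A i` on the tensor factor `i` for `i ∈ S` and trivially on the others.
It is `localOp` for arbitrary sites, local dimension and scalars. -/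
def localKronecker (A : {i // i ∈ S} → Matrix d d R) : Matrix (ι → d) (ι → d) R :=
  piKronecker fun i => if h : i ∈ S then A ⟨i, h⟩ else 1

lemma localKronecker_apply (A : {i // i ∈ S} → Matrix d d R) (x y : ι → d) :
    localKronecker S A x y = (∏ i : {i // i ∈ S}, A i (x i) (y i)) *
      ∏ i : {i // i ∉ S}, (1 : Matrix d d R) (x i) (y i) := by
  calc localKronecker S A x y
    _ = ∏ i, if h : i ∈ S then A ⟨i, h⟩ (x i) (y i) else (1 : Matrix d d R) (x i) (y i) :=
      Fintype.prod_congr _ _ fun i => by dsimp only; split_ifs <;> rfl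
    _ = _ := by convert Fintype.prod_dite _ _

lemma localKronecker_mul [Fintype d] (A B : {i // i ∈ S} → Matrix d d R) :
    localKronecker S A * localKronecker S B = localKronecker S fun i => A i * B i := by
  simp only [localKronecker, piKronecker_mul]
  congr! 2 with i
  split_ifs
  · rfl
  · exact one_mul 1

lemma localKronecker_conjTranspose [StarRing R] (A : {i // i ∈ S} → Matrix d d R) :
    (localKronecker S A)ᴴ = localKronecker S fun i => (A i)ᴴ := by
  simp only [localKronecker, piKronecker_conjTranspose, apply_dite conjTranspose,
    conjTranspose_one]

lemma localKronecker_smul (c : R) (A : {i // i ∈ S} → Matrix d d R) :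
    localKronecker S (fun i => c • A i) = c ^ S.card • localKronecker S A := by
  ext x y
  simp only [localKronecker_apply, Matrix.smul_apply, smul_eq_mul, Finset.prod_mul_distrib,
    Finset.prod_const, Finset.card_univ, Fintype.card_coe, mul_assoc]

lemma sum_localKronecker {κ : Type*} [Fintype κ] (A : {i // i ∈ S} → κ → Matrix d d R) :
    ∑ z : {i // i ∈ S} → κ, localKronecker S (fun i => A i (z i)) =
      localKronecker S fun i => ∑ k, A i k := by
  ext x y
  simp only [Matrix.sum_apply, localKronecker_apply, ← Finset.sum_mul, Finset.prod_univ_sum,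
    Fintype.piFinset_univ]

lemma isStarProjection_localKronecker [Fintype d] [StarRing R] {A : {i // i ∈ S} → Matrix d d R}
    (hA : ∀ i, IsStarProjection (A i)) : IsStarProjection (localKronecker S A) :=
  isStarProjection_piKronecker fun i => by
    split_ifs with h
    · exact hA ⟨i, h⟩
    · exact IsStarProjection.one _

lemma localKronecker_one : localKronecker S (fun _ => (1 : Matrix d d R)) = 1 := by
  ext x y
  simp only [localKronecker, dite_eq_ite, ite_self, piKronecker, of_apply, one_apply,
    Fintype.prod_ite_zero, Finset.prod_const_one, funext_iff]

lemma localKronecker_kronecker (A B : {i // i ∈ S} → Matrix d d R) :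
    localKronecker S (fun i => A i ⊗ₖ B i) =
      (localKronecker S A ⊗ₖ localKronecker S B).submatrix (Equiv.arrowProdEquivProdArrow ι _ _)
        (Equiv.arrowProdEquivProdArrow ι _ _) := by
  rw [localKronecker, localKronecker, localKronecker, ← piKronecker_kronecker]
  congr! 2 with i
  split_ifs
  · rfl
  · exact one_kronecker_one.symm

omit [Fintype ι] [DecidableEq ι] [DecidableEq d] in
/-- The state `ρ ⊗ ρ`, with the two copies of each tensor factor grouped together. -/
def twoCopies (ρ : Matrix (ι → d) (ι → d) R) : Matrix (ι → d × d) (ι → d × d) R :=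
  (ρ ⊗ₖ ρ).submatrix (Equiv.arrowProdEquivProdArrow ι _ _) (Equiv.arrowProdEquivProdArrow ι _ _)

omit [DecidableEq d] in
lemma trace_twoCopies [Fintype d] (ρ : Matrix (ι → d) (ι → d) R) :
    (twoCopies ρ).trace = ρ.trace ^ 2 := by
  rw [twoCopies, trace_submatrix_equiv, trace_kronecker, sq]

lemma trace_twoCopies_mul_localKronecker_kronecker_self [Fintype d]
    (ρ : Matrix (ι → d) (ι → d) R) (A : {i // i ∈ S} → Matrix d d R) :
    (twoCopies ρ * localKronecker S fun i => A i ⊗ₖ A i).trace =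
      (ρ * localKronecker S A).trace ^ 2 := by
  rw [twoCopies, localKronecker_kronecker, submatrix_mul_equiv, ← mul_kronecker_mul,
    trace_submatrix_equiv, trace_kronecker, sq]

end TensorProduct

section PosSemidef

open scoped ComplexOrder

variable {m : Type*} [Fintype m] {ρ Q : Matrix m m ℂ}

lemma trace_mul_nonneg (hρ : ρ.PosSemidef) (hQ : IsStarProjection Q) :
    0 ≤ (ρ * Q).trace := by
  have h : (ρ * Q).trace = (Q * ρ * Qᴴ).trace := by
    rw [← star_eq_conjTranspose, hQ.isSelfAdjoint.star_eq, trace_mul_cycle,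
      hQ.isIdempotentElem.eq, trace_mul_comm]
  rw [h]
  exact (hρ.mul_mul_conjTranspose_same Q).trace_nonneg

lemma trace_mul_le_trace (hρ : ρ.PosSemidef) (hQ : IsStarProjection Q) :
    (ρ * Q).trace ≤ ρ.trace := by
  classical
  have h := trace_mul_nonneg hρ hQ.one_sub
  rwa [mul_sub, mul_one, trace_sub, sub_nonneg] at h

lemma posSemidef_twoCopies {ι d : Type*} [Finite ι] [Finite d]
    {ρ : Matrix (ι → d) (ι → d) ℂ} (hρ : ρ.PosSemidef) : (twoCopies ρ).PosSemidef := by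
  have := Fintype.ofFinite (ι → d)
  exact (hρ.kronecker hρ).submatrix _

end PosSemidef

section MatrixIntegral

variable {Ω m l : Type*} [MeasurableSpace Ω] {ν : Measure Ω}

/-- The integral of a matrix-valued function. It is taken entrywise because matrices carry no
canonical norm. -/
noncomputable def matrixIntegral (ν : Measure Ω) (F : Ω → Matrix m l ℂ) : Matrix m l ℂ :=
  of fun i j => ∫ ω, F ω i j ∂ν

lemma linearMap_apply_eq_sum_single [Fintype m] [Fintype l] [DecidableEq m] [DecidableEq l]
    (Φ : Matrix m l ℂ →ₗ[ℂ] ℂ) (A : Matrix m l ℂ) :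
    Φ A = ∑ i, ∑ j, A i j * Φ (single i j 1) := by
  conv_lhs => rw [matrix_eq_sum_single A, map_sum]
  refine Finset.sum_congr rfl fun i _ => ?_
  rw [map_sum]
  refine Finset.sum_congr rfl fun j _ => ?_
  rw [← smul_eq_mul, ← map_smul, smul_single, smul_eq_mul, mul_one]

variable [Finite m] [Finite l] {F : Ω → Matrix m l ℂ}

lemma integral_linearMap_comp (hF : ∀ i j, Integrable (fun ω => F ω i j) ν)
    (Φ : Matrix m l ℂ →ₗ[ℂ] ℂ) : ∫ ω, Φ (F ω) ∂ν = Φ (matrixIntegral ν F) := by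
  classical
  have := Fintype.ofFinite m
  have := Fintype.ofFinite l
  have hint (i : m) (j : l) : Integrable (fun ω => F ω i j * Φ (single i j 1)) ν :=
    (hF i j).mul_const _
  rw [linearMap_apply_eq_sum_single Φ (matrixIntegral ν F)]
  simp_rw [linearMap_apply_eq_sum_single Φ (F _)]
  rw [integral_finsetSum _ fun i _ => integrable_finsetSum _ fun j _ => hint i j]
  refine Finset.sum_congr rfl fun i _ => ?_
  rw [integral_finsetSum _ fun j _ => hint i j]
  simp only [integral_mul_const, matrixIntegral, of_apply]

lemma matrixIntegral_linearMap_comp {m' l' : Type*} (hF : ∀ i j, Integrable (fun ω => F ω i j) ν)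
    (Φ : Matrix m l ℂ →ₗ[ℂ] Matrix m' l' ℂ) :
    matrixIntegral ν (fun ω => Φ (F ω)) = Φ (matrixIntegral ν F) := by
  ext i j
  exact integral_linearMap_comp hF (entryLinearMap ℂ ℂ i j ∘ₗ Φ)

section Pi

variable {ι d : Type*} [Fintype ι] [DecidableEq ι] [DecidableEq d] (S : Finset ι)
  [SigmaFinite ν] {F : {i // i ∈ S} → Ω → Matrix d d ℂ}

lemma integrable_localKronecker_apply (hF : ∀ i a b, Integrable (fun ω => F i ω a b) ν)
    (x y : ι → d) :
    Integrable (fun ω : {i // i ∈ S} → Ω => localKronecker S (fun i => F i (ω i)) x y)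
      (Measure.pi fun _ => ν) := by
  simp_rw [localKronecker_apply]
  exact (Integrable.fintype_prod fun i => hF i _ _).mul_const _

lemma matrixIntegral_localKronecker :
    matrixIntegral (Measure.pi fun _ => ν)
        (fun ω : {i // i ∈ S} → Ω => localKronecker S fun i => F i (ω i)) =
      localKronecker S fun i => matrixIntegral ν (F i) := by
  ext x y
  simp only [matrixIntegral, of_apply, localKronecker_apply]
  rw [integral_mul_const, integral_fintype_prod_eq_prod (fun i ω => F i ω (x i) (y i))]

end Pi

end MatrixIntegral

section Haar

instance isMulRightInvariant_of_isHaarMeasure {G : Type*} [Group G] [TopologicalSpace G]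
    [IsTopologicalGroup G] [CompactSpace G] [MeasurableSpace G] [BorelSpace G] (μ : Measure G)
    [μ.IsHaarMeasure] [IsProbabilityMeasure μ] : μ.IsMulRightInvariant where
  map_mul_right_eq_self g :=
    have := Measure.isProbabilityMeasure_map (μ := μ) (measurable_mul_const g).aemeasurable
    Measure.isHaarMeasure_eq_of_isProbabilityMeasure (μ.map (· * g)) μ

variable {d : Type*} [Fintype d] [DecidableEq d]

instance compactSpace_unitaryGroup : CompactSpace (unitaryGroup d ℂ) := by
  have hcompact : IsCompact {A : Matrix d d ℂ | ∀ a ∈ Set.univ, ∀ b ∈ Set.univ,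
      A a b ∈ Metric.closedBall (0 : ℂ) 1} :=
    isCompact_univ_pi fun _ => isCompact_univ_pi fun _ => isCompact_closedBall 0 1
  refine isCompact_iff_compactSpace.mp (hcompact.of_isClosed_subset isClosed_unitary ?_)
  intro U hU a _ b _
  exact mem_closedBall_zero_iff.mpr (entry_norm_bound_of_unitary hU a b)

variable (U W : unitaryGroup d ℂ) (z : d)

/-- The operator `U† |z⟩⟨z| U` whose expectation in a state is the probability of obtaining the
outcome `z` when a computational basis measurement is preceded by `U`. -/
noncomputable def effect : Matrix d d ℂ :=
  star (U : Matrix d d ℂ) * single z z 1 * U.1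

lemma effect_apply (a b : d) : effect U z a b = star (U.1 z a) * U.1 z b := by
  simp [effect, mul_apply, single_apply, ite_and]

lemma effect_mul : effect (U * W) z = star (W : Matrix d d ℂ) * effect U z * W.1 := by
  simp only [effect, Submonoid.coe_mul, star_mul, mul_assoc]

lemma isStarProjection_effect : IsStarProjection (effect U z) where
  isIdempotentElem := by
    have hU : (U : Matrix d d ℂ) * star (U : Matrix d d ℂ) = 1 := mem_unitaryGroup_iff.mp U.2
    simp only [IsIdempotentElem, effect, mul_assoc]
    rw [← mul_assoc U.1, hU, one_mul, ← mul_assoc (single z z 1), single_mul_single_same, one_mul]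
  isSelfAdjoint := by
    simp only [IsSelfAdjoint, effect, star_mul, star_star, mul_assoc]
    rw [star_eq_conjTranspose (single z z 1), conjTranspose_single, star_one]

lemma sum_effect : ∑ z, effect U z = 1 := by
  simp only [effect, ← Finset.sum_mul, ← Finset.mul_sum, sum_single_one, mul_one]
  exact mem_unitaryGroup_iff'.mp U.2

lemma trace_effect : (effect U z).trace = 1 := by
  rw [effect, trace_mul_cycle, mem_unitaryGroup_iff.mp U.2, one_mul, trace_single_eq_same]

lemma continuous_effect : Continuous fun U : unitaryGroup d ℂ => effect U z := by
  unfold effect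
  fun_prop

/-- The two-copy operator `∑ z, (U† |z⟩⟨z| U) ⊗ (U† |z⟩⟨z| U)` whose expectation in `ρ ⊗ ρ` is the
probability that two independent measurements of `ρ` have the same outcome. -/
noncomputable def collisionOp : Matrix (d × d) (d × d) ℂ :=
  ∑ z, effect U z ⊗ₖ effect U z

lemma kronecker_self_mul_collisionOp_mul :
    (W.1 ⊗ₖ W.1) * collisionOp (U * W) = collisionOp U * (W.1 ⊗ₖ W.1) := by
  have hW : (W : Matrix d d ℂ) * star (W : Matrix d d ℂ) = 1 := mem_unitaryGroup_iff.mp W.2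
  simp only [collisionOp, Finset.mul_sum, Finset.sum_mul, effect_mul, ← mul_kronecker_mul,
    ← mul_assoc, hW, one_mul]

lemma collisionOp_mul_swapMatrix : collisionOp U * swapMatrix d = collisionOp U := by
  ext v w
  simp only [mul_swapMatrix_apply, collisionOp, Matrix.sum_apply, kroneckerMap_apply, effect_apply,
    Prod.fst_swap, Prod.snd_swap]
  exact Finset.sum_congr rfl fun z _ => by ring

lemma trace_collisionOp : (collisionOp U).trace = Fintype.card d := by
  simp only [collisionOp, trace_sum, trace_kronecker, trace_effect, mul_one, Finset.sum_const,
    Finset.card_univ, nsmul_one]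

lemma continuous_collisionOp : Continuous (collisionOp (d := d)) :=
  continuous_matrix fun v w => by
    simp only [collisionOp, Matrix.sum_apply, kroneckerMap_apply]
    exact continuous_finsetSum _ fun z _ =>
      ((continuous_effect z).matrix_elem _ _).mul ((continuous_effect z).matrix_elem _ _)

variable [MeasurableSpace (unitaryGroup d ℂ)] [BorelSpace (unitaryGroup d ℂ)]
  (μ : Measure (unitaryGroup d ℂ))

lemma integrable_collisionOp_apply [IsFiniteMeasure μ] (v w : d × d) :
    Integrable (fun U => collisionOp U v w) μ :=
  (continuous_collisionOp.matrix_elem v w).integrable_of_hasCompactSupport (.of_compactSpace _)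

lemma commute_matrixIntegral_collisionOp [IsFiniteMeasure μ] [μ.IsMulRightInvariant]
    (W : unitaryGroup d ℂ) : Commute (W.1 ⊗ₖ W.1) (matrixIntegral μ collisionOp) := by
  have hinv : matrixIntegral μ (fun U => collisionOp (U * W)) = matrixIntegral μ collisionOp := by
    ext v w
    exact integral_mul_right_eq_self (fun U => collisionOp U v w) W
  calc (W.1 ⊗ₖ W.1) * matrixIntegral μ collisionOp
    _ = (W.1 ⊗ₖ W.1) * matrixIntegral μ fun U => collisionOp (U * W) := by rw [hinv]
    _ = matrixIntegral μ fun U => (W.1 ⊗ₖ W.1) * collisionOp (U * W) :=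
      (matrixIntegral_linearMap_comp
        (fun v w => (integrable_collisionOp_apply μ v w).comp_mul_right W)
        (LinearMap.mulLeft ℂ (W.1 ⊗ₖ W.1))).symm
    _ = matrixIntegral μ fun U => collisionOp U * (W.1 ⊗ₖ W.1) := by
      simp only [kronecker_self_mul_collisionOp_mul]
    _ = matrixIntegral μ collisionOp * (W.1 ⊗ₖ W.1) :=
      matrixIntegral_linearMap_comp (integrable_collisionOp_apply μ)
        (LinearMap.mulRight ℂ (W.1 ⊗ₖ W.1))

lemma matrixIntegral_collisionOp [IsProbabilityMeasure μ] [μ.IsMulRightInvariant] :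
    matrixIntegral μ collisionOp = (2 / (Fintype.card d + 1) : ℂ) • symProj d := by
  have hsymm : matrixIntegral μ collisionOp * swapMatrix d = matrixIntegral μ collisionOp := by
    rw [← LinearMap.mulRight_apply (R := ℂ),
      ← matrixIntegral_linearMap_comp (integrable_collisionOp_apply μ)]
    simp only [LinearMap.mulRight_apply, collisionOp_mul_swapMatrix]
  have htrace : (matrixIntegral μ (collisionOp (d := d))).trace = Fintype.card d := by
    rw [← traceLinearMap_apply (d × d) ℂ ℂ,
      ← integral_linearMap_comp (integrable_collisionOp_apply μ)]
    simp [trace_collisionOp]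
  obtain ⟨c, hc⟩ := exists_eq_smul_symProj_of_commute_kronecker_self
    (fun W hW => commute_matrixIntegral_collisionOp μ ⟨W, hW⟩) hsymm
  rcases isEmpty_or_nonempty d with hd | hd
  · exact Subsingleton.elim _ _
  rw [hc, trace_smul, trace_symProj, smul_eq_mul] at htrace
  have hd0 : (Fintype.card d : ℂ) ≠ 0 := by simp
  have hd1 : (Fintype.card d : ℂ) + 1 ≠ 0 := by exact_mod_cast (Fintype.card d).succ_ne_zero
  rw [hc]
  congr 1
  rw [eq_div_iff hd1]
  exact mul_left_cancel₀ hd0 (by linear_combination 2 * htrace)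

end Haar

section Born

open scoped ComplexOrder

/-- A density matrix, that is, a possibly mixed quantum state. -/
structure IsDensityMatrix {m : Type*} [Fintype m] (ρ : Matrix m m ℂ) : Prop where
  posSemidef : ρ.PosSemidef
  trace_eq_one : ρ.trace = 1

lemma isDensityMatrix_vecMulVec_self_star {m : Type*} [Fintype m] {ψ : m → ℂ}
    (hψ : ∑ x, star (ψ x) * ψ x = 1) : IsDensityMatrix (vecMulVec ψ (star ψ)) where
  posSemidef := posSemidef_vecMulVec_self_star ψ
  trace_eq_one := by rw [trace_vecMulVec, dotProduct_comm]; exact hψ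

variable {n : ℕ} {ρ : QMat n} {S : Finset (Fin n)}
  (V : {i // i ∈ S} → unitaryGroup (Fin 2) ℂ) (z : {i // i ∈ S} → Fin 2)

lemma localOp_eq_localKronecker (A : {i // i ∈ S} → Matrix (Fin 2) (Fin 2) ℂ) :
    localOp S A = localKronecker S A := by
  ext x y
  refine Fintype.prod_congr _ _ fun i => ?_
  dsimp only
  split_ifs with h hxy
  · rfl
  · rw [hxy, one_apply_eq]
  · rw [one_apply_ne hxy]

lemma projZ_eq_localKronecker :
    projZ S z = localKronecker S fun i => single (z i) (z i) 1 := by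
  ext x y
  refine Fintype.prod_congr _ _ fun i => ?_
  dsimp only
  split_ifs with h hxy hxy
  · rw [hxy.1, hxy.2, single_apply_same]
  · rw [single_apply, if_neg (by rwa [eq_comm, eq_comm (a := z _)])]
  · rw [hxy, one_apply_eq]
  · rw [one_apply_ne hxy]

lemma born_eq_re_trace_mul_localKronecker_effect :
    born ρ S V z = (ρ * localKronecker S fun i => effect (V i) (z i)).trace.re := by
  rw [born, localOp_eq_localKronecker, projZ_eq_localKronecker, mul_assoc, mul_assoc,
    trace_mul_comm, mul_assoc, localKronecker_conjTranspose, localKronecker_mul,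
    localKronecker_mul]
  rfl

lemma sum_born : ∑ z, born ρ S V z = ρ.trace.re := by
  simp_rw [born_eq_re_trace_mul_localKronecker_effect, ← Complex.re_sum, ← trace_sum,
    ← Finset.mul_sum, sum_localKronecker S fun i => effect (V i), sum_effect, localKronecker_one,
    mul_one]

lemma measurable_born : Measurable fun V => born ρ S V z := by
  simp_rw [born_eq_re_trace_mul_localKronecker_effect, trace, diag_apply, mul_apply,
    localKronecker_apply]
  refine Complex.measurable_re.comp <| Finset.measurable_fun_sum _ fun x _ =>
    Finset.measurable_fun_sum _ fun y _ =>
      ((Finset.measurable_fun_prod _ fun i _ => ?_).mul_const _).const_mul _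
  exact ((continuous_effect (z i)).matrix_elem _ _).measurable.comp (measurable_pi_apply i)

section PosSemidef

variable (hρ : ρ.PosSemidef)
include hρ

lemma trace_mul_localKronecker_effect_nonneg :
    0 ≤ (ρ * localKronecker S fun i => effect (V i) (z i)).trace :=
  trace_mul_nonneg hρ <|
    isStarProjection_localKronecker S fun i => isStarProjection_effect (V i) (z i)

lemma born_nonneg : 0 ≤ born ρ S V z := by
  rw [born_eq_re_trace_mul_localKronecker_effect]
  exact (Complex.nonneg_iff.mp (trace_mul_localKronecker_effect_nonneg V z hρ)).1

lemma ofReal_born :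
    (born ρ S V z : ℂ) = (ρ * localKronecker S fun i => effect (V i) (z i)).trace := by
  rw [born_eq_re_trace_mul_localKronecker_effect]
  exact (Complex.eq_re_of_ofReal_le (trace_mul_localKronecker_effect_nonneg V z hρ)).symm

lemma ofReal_sum_born_sq :
    ((∑ z, born ρ S V z ^ 2 : ℝ) : ℂ) =
      (twoCopies ρ * localKronecker S fun i => collisionOp (V i)).trace := by
  simp_rw [collisionOp, ← sum_localKronecker S fun i z => effect (V i) z ⊗ₖ effect (V i) z,
    Finset.mul_sum, trace_sum, trace_twoCopies_mul_localKronecker_kronecker_self]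
  push_cast
  simp_rw [ofReal_born V _ hρ]

variable (μ : Measure (unitaryGroup (Fin 2) ℂ)) [IsProbabilityMeasure μ] [μ.IsMulRightInvariant]

lemma ofReal_integral_sum_born_sq :
    ((∫ V, ∑ z, born ρ S V z ^ 2 ∂(Measure.pi fun _ => μ) : ℝ) : ℂ) =
      (2 / 3) ^ S.card * (twoCopies ρ * localKronecker S fun _ => symProj (Fin 2)).trace := by
  have hint := integrable_localKronecker_apply (d := Fin 2 × Fin 2) S
    fun (_ : {i // i ∈ S}) => integrable_collisionOp_apply μ
  have hmean : (2 / (Fintype.card (Fin 2) + 1) : ℂ) = 2 / 3 := by norm_num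
  rw [← integral_complex_ofReal]
  simp_rw [ofReal_sum_born_sq _ hρ]
  calc ∫ V, (twoCopies ρ * localKronecker S fun i => collisionOp (V i)).trace
        ∂(Measure.pi fun _ => μ)
    _ = (twoCopies ρ * matrixIntegral (Measure.pi fun _ => μ)
        fun V : {i // i ∈ S} → _ => localKronecker S fun i => collisionOp (V i)).trace :=
      integral_linearMap_comp hint (traceLinearMap _ ℂ ℂ ∘ₗ LinearMap.mulLeft ℂ (twoCopies ρ))
    _ = (twoCopies ρ * localKronecker S fun _ => (2 / 3 : ℂ) • symProj (Fin 2)).trace := by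
      rw [matrixIntegral_localKronecker, matrixIntegral_collisionOp, hmean]
    _ = _ := by
      rw [localKronecker_smul, mul_smul_comm, trace_smul, smul_eq_mul]

end PosSemidef

lemma integral_sum_born_sq_le (hρ : IsDensityMatrix ρ) (μ : Measure (unitaryGroup (Fin 2) ℂ))
    [IsProbabilityMeasure μ] [μ.IsMulRightInvariant] :
    ∫ V, ∑ z, born ρ S V z ^ 2 ∂(Measure.pi fun _ => μ) ≤ (2 / 3) ^ S.card := by
  have htrace : (twoCopies ρ * localKronecker S fun _ => symProj (Fin 2)).trace ≤ 1 := by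
    refine (trace_mul_le_trace (posSemidef_twoCopies hρ.posSemidef) <|
      isStarProjection_localKronecker S fun _ => isStarProjection_symProj).trans_eq ?_
    rw [trace_twoCopies, hρ.trace_eq_one, one_pow]
  rw [← Complex.real_le_real, ofReal_integral_sum_born_sq hρ.posSemidef]
  push_cast
  exact mul_le_of_le_one_right (by positivity) htrace

end Born

section CountableOutcomes

variable {Ω κ : Type*} [MeasurableSpace Ω] [MeasurableSpace κ] [MeasurableSingletonClass κ]

lemma measurable_measure_of_measurable_singleton [Countable κ] {π : Ω → Measure κ}
    (hπ : ∀ z, Measurable fun ω => π ω {z}) : Measurable π := by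
  refine Measure.measurable_of_measurable_coe _ fun s hs => ?_
  simp_rw [← Measure.tsum_indicator_apply_singleton _ s hs]
  refine Measurable.tsum fun z => ?_
  by_cases hz : z ∈ s
  · simpa only [Set.indicator_of_mem hz] using hπ z
  · simp only [Set.indicator_of_notMem hz, measurable_const]

lemma measurable_measurePi [Countable κ] (ι : Type*) [Fintype ι] {π : Ω → Measure κ}
    [∀ ω, SigmaFinite (π ω)] (hπ : Measurable π) :
    Measurable fun ω => Measure.pi fun _ : ι => π ω := by
  refine measurable_measure_of_measurable_singleton fun ζ => ?_
  simp_rw [Measure.pi_singleton]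
  exact Finset.measurable_fun_prod _ fun i _ =>
    (Measure.measurable_coe (measurableSet_singleton (ζ i))).comp hπ

omit [MeasurableSingletonClass κ] in
lemma measurable_map_prodMk {π : Ω → Measure κ} [∀ ω, IsProbabilityMeasure (π ω)]
    (hπ : Measurable π) : Measurable fun ω => (π ω).map (Prod.mk ω) := by
  let k : ProbabilityTheory.Kernel Ω κ := ⟨π, hπ⟩
  have : ProbabilityTheory.IsMarkovKernel k := ⟨inferInstance⟩
  refine Measure.measurable_of_measurable_coe _ fun A hA => ?_
  simp_rw [Measure.map_apply measurable_prodMk_left hA]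
  exact ProbabilityTheory.Kernel.measurable_kernel_prodMk_left (κ := k) hA

lemma measurePi_fin_two_diagonal [Fintype κ] (ν : Measure κ) [SigmaFinite ν] :
    (Measure.pi fun _ : Fin 2 => ν) {ζ | ζ 0 = ζ 1} = ∑ z, ν {z} ^ 2 := by
  have hdiag : MeasurableSet (Set.diagonal κ) := (Set.toFinite _).measurableSet
  calc (Measure.pi fun _ : Fin 2 => ν) {ζ | ζ 0 = ζ 1}
    _ = ν.prod ν (Set.diagonal κ) :=
      (measurePreserving_finTwoArrow ν).measure_preimage hdiag.nullMeasurableSet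
    _ = ∫⁻ z, ν {z} ∂ν := by
      rw [Measure.prod_apply hdiag]
      congr! 3 with z
      ext w
      simp [eq_comm]
    _ = ∑ z, ν {z} ^ 2 := by simp only [lintegral_fintype, sq]

end CountableOutcomes

section JointLaw

variable {n : ℕ} {ρ : QMat n} {S : Finset (Fin n)}

lemma bornMeasure_singleton (V : {i // i ∈ S} → unitaryGroup (Fin 2) ℂ)
    (z : {i // i ∈ S} → Fin 2) : bornMeasure ρ S V {z} = ENNReal.ofReal (born ρ S V z) := by
  simp [bornMeasure, Set.indicator_apply]

lemma measurable_bornMeasure : Measurable (bornMeasure ρ S) :=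
  measurable_measure_of_measurable_singleton fun z => by
    simp only [bornMeasure_singleton]
    exact (measurable_born z).ennreal_ofReal

lemma isProbabilityMeasure_bornMeasure (hρ : IsDensityMatrix ρ)
    (V : {i // i ∈ S} → unitaryGroup (Fin 2) ℂ) : IsProbabilityMeasure (bornMeasure ρ S V) where
  measure_univ := by
    rw [← Finset.coe_univ, ← sum_measure_singleton]
    simp only [bornMeasure_singleton]
    rw [← ENNReal.ofReal_sum_of_nonneg fun z _ => born_nonneg V z hρ.posSemidef, sum_born,
      hρ.trace_eq_one, Complex.one_re, ENNReal.ofReal_one]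

lemma measurable_map_measurePi_bornMeasure (hρ : IsDensityMatrix ρ) (K : ℕ) :
    Measurable fun V => (Measure.pi fun _ : Fin K => bornMeasure ρ S V).map (Prod.mk V) :=
  have := isProbabilityMeasure_bornMeasure (S := S) hρ
  measurable_map_prodMk (measurable_measurePi (Fin K) measurable_bornMeasure)

lemma isProbabilityMeasure_jointRound (hρ : IsDensityMatrix ρ)
    (μ : Measure (unitaryGroup (Fin 2) ℂ)) [IsProbabilityMeasure μ] (K : ℕ) :
    IsProbabilityMeasure (jointRound μ ρ S K) := by
  have := isProbabilityMeasure_bornMeasure (S := S) hρ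
  exact isProbabilityMeasure_bind (measurable_map_measurePi_bornMeasure hρ K).aemeasurable
    (.of_forall fun V => Measure.isProbabilityMeasure_map measurable_prodMk_left.aemeasurable)

lemma measurableSet_snd_zero_eq_one {Ω κ : Type*} [MeasurableSpace Ω] [MeasurableSpace κ]
    [MeasurableEq κ] : MeasurableSet {ω : Ω × (Fin 2 → κ) | ω.2 0 = ω.2 1} :=
  measurableSet_eq_fun ((measurable_pi_apply 0).comp measurable_snd)
    ((measurable_pi_apply 1).comp measurable_snd)

lemma jointRound_real_collision (hρ : IsDensityMatrix ρ) (μ : Measure (unitaryGroup (Fin 2) ℂ)) :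
    (jointRound μ ρ S 2).real {ω | ω.2 0 = ω.2 1} =
      ∫ V, ∑ z, born ρ S V z ^ 2 ∂(Measure.pi fun _ => μ) := by
  have := isProbabilityMeasure_bornMeasure (S := S) hρ
  have hmeas : Measurable fun V => ∑ z, born ρ S V z ^ 2 :=
    Finset.measurable_fun_sum _ fun z _ => (measurable_born z).pow_const 2
  have hA := measurableSet_snd_zero_eq_one (Ω := {i // i ∈ S} → unitaryGroup (Fin 2) ℂ)
    (κ := {i // i ∈ S} → Fin 2)
  rw [integral_eq_lintegral_of_nonneg_ae (.of_forall fun V => by positivity)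
      hmeas.aestronglyMeasurable, Measure.real, jointRound,
    Measure.bind_apply hA (measurable_map_measurePi_bornMeasure hρ 2).aemeasurable]
  congr! 3 with V
  rw [Measure.map_apply measurable_prodMk_left hA, Set.preimage_ofPred_eq,
    measurePi_fin_two_diagonal, ENNReal.ofReal_sum_of_nonneg fun z _ => sq_nonneg _]
  simp only [bornMeasure_singleton, ENNReal.ofReal_pow (born_nonneg V _ hρ.posSemidef)]

end JointLaw

lemma variance_const_sub_const_mul_ite {Ω : Type*} [MeasurableSpace Ω] (P : Measure Ω)
    [IsProbabilityMeasure P] (a b : ℝ) {p : Ω → Prop} [DecidablePred p]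
    (hp : MeasurableSet {ω | p ω}) :
    ProbabilityTheory.variance (fun ω => a - b * (if p ω then 1 else 0)) P =
      b ^ 2 * (P.real {ω | p ω} * (1 - P.real {ω | p ω})) := by
  have hite : (fun ω => if p ω then (1 : ℝ) else 0) = {ω | p ω}.indicator 1 := by
    ext ω
    simp only [Set.indicator_apply, Set.mem_ofPred_eq, Pi.one_apply]
  have hmem : MemLp (fun ω => if p ω then (1 : ℝ) else 0) 2 P := by
    rw [hite]
    exact (memLp_const (1 : ℝ)).indicator hp
  have hsq : (fun ω => if p ω then (1 : ℝ) else 0) ^ 2 = fun ω => if p ω then (1 : ℝ) else 0 := by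
    ext ω
    simp
  rw [ProbabilityTheory.variance_const_sub (hmem.aestronglyMeasurable.const_mul b),
    ProbabilityTheory.variance_const_mul, ProbabilityTheory.variance_eq_sub hmem, hsq, hite,
    integral_indicator_one hp]
  ring

theorem LRM_K2_variance_bound_general {n : ℕ} {ρ : QMat n} (hρ : IsDensityMatrix ρ)
    (S : Finset (Fin n)) (μ : Measure (unitaryGroup (Fin 2) ℂ)) [μ.IsHaarMeasure]
    [IsProbabilityMeasure μ] (P2 : ℝ)
    (hP2 : P2 = ∫ V : {i // i ∈ S} → unitaryGroup (Fin 2) ℂ, ∑ z, born ρ S V z ^ 2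
      ∂(Measure.pi fun _ => μ)) :
    P2 ≤ (2 / 3 : ℝ) ^ S.card ∧
    ProbabilityTheory.variance
        (fun ω => 1 - (3 / 2 : ℝ) ^ S.card * (if ω.2 0 = ω.2 1 then 1 else 0))
        (jointRound μ ρ S 2)
      = (9 / 4 : ℝ) ^ S.card * (P2 * (1 - P2)) ∧
    ProbabilityTheory.variance
        (fun ω => 1 - (3 / 2 : ℝ) ^ S.card * (if ω.2 0 = ω.2 1 then 1 else 0))
        (jointRound μ ρ S 2)
      ≤ (3 / 2 : ℝ) ^ S.card := by
  have := isProbabilityMeasure_jointRound (S := S) hρ μ 2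
  have hle : P2 ≤ (2 / 3) ^ S.card := hP2 ▸ integral_sum_born_sq_le hρ μ
  have hpow : ((3 / 2 : ℝ) ^ S.card) ^ 2 = (9 / 4) ^ S.card := by
    rw [pow_right_comm]
    norm_num
  have hvar := variance_const_sub_const_mul_ite (jointRound μ ρ S 2) 1 ((3 / 2) ^ S.card)
    measurableSet_snd_zero_eq_one
  rw [jointRound_real_collision hρ μ, ← hP2, hpow] at hvar
  refine ⟨hle, hvar, hvar.trans_le ?_⟩
  calc (9 / 4 : ℝ) ^ S.card * (P2 * (1 - P2))
    _ ≤ (9 / 4) ^ S.card * (2 / 3) ^ S.card := by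
      gcongr
      exact (by nlinarith [sq_nonneg P2] : P2 * (1 - P2) ≤ P2).trans hle
    _ = (3 / 2) ^ S.card := by
      rw [← mul_pow]
      norm_num

/-- `P₂ ≤ (2/3)^s`, and the single-unitary `K = 2` estimator
`Ĉ^{(2)} = 1 - (3/2)^s 1{Z₁ = Z₂}` has variance `(9/4)^s P₂(1−P₂) ≤ (3/2)^s`. -/
theorem LRM_K2_variance_bound (n : ℕ) (ψ : (Fin n → Fin 2) → ℂ)
    (hψ : (∑ x, star (ψ x) * ψ x) = 1)
    (S : Finset (Fin n)) (hS : S.Nonempty)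
    (μ : Measure (Matrix.unitaryGroup (Fin 2) ℂ)) [μ.IsHaarMeasure] [IsProbabilityMeasure μ]
    (P2 : ℝ)
    (hP2 : P2 = ∫ V : ({i : Fin n // i ∈ S} → Matrix.unitaryGroup (Fin 2) ℂ),
        (∑ z : ({i : Fin n // i ∈ S} → Fin 2), (born (Matrix.vecMulVec ψ (star ψ)) S V z) ^ 2)
        ∂(Measure.pi fun _ : {i : Fin n // i ∈ S} => μ)) :
    P2 ≤ (2 / 3 : ℝ) ^ S.card ∧
    ProbabilityTheory.variance
        (fun ω => 1 - (3 / 2 : ℝ) ^ S.card * (if ω.2 0 = ω.2 1 then 1 else 0))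
        (jointRound μ (Matrix.vecMulVec ψ (star ψ)) S 2)
      = (9 / 4 : ℝ) ^ S.card * (P2 * (1 - P2)) ∧
    ProbabilityTheory.variance
        (fun ω => 1 - (3 / 2 : ℝ) ^ S.card * (if ω.2 0 = ω.2 1 then 1 else 0))
        (jointRound μ (Matrix.vecMulVec ψ (star ψ)) S 2)
      ≤ (3 / 2 : ℝ) ^ S.card :=
  LRM_K2_variance_bound_general (isDensityMatrix_vecMulVec_self_star hψ) S μ P2 hP2
end
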